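/- Let r₀ > 0, λ ≠ 0, and L, c real. Define on (r₀, ∞): f(r) = (1 − (r₀/r)²)/(1 + (r₀/r)²), g(r) = 1 − (r₀/r)⁴, and H(r) = (L²/(2λr₀²))·sinh(c − λ log f(r)). Then for all r > r₀, (H′(r))² − λ²·H(r)²·(f′(r)/f(r))² = 4L⁴/(r⁶ g(r)²). -/

import Mathlib

/-!
For any phase `φ`, the identity `cosh² - sinh² = 1` gives
`(A sinh φ)'² - (A sinh φ)² φ'² = (A φ')²`. With `φ = c - lam log f` the right-hand side is
`(A lam f'/f)²`, and for `f = (1 - u) / (1 + u)` the logarithmic derivative is `-2u' / (1 - u²)`: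
this is where `g = 1 - u²` with `u = (r₀/r)²` comes from.
-/

section LogDeriv

variable {𝕜 : Type*} [NontriviallyNormedField 𝕜]

theorem logDeriv_one_sub_div_one_add {𝕜' : Type*} [NontriviallyNormedField 𝕜']
    [NormedAlgebra 𝕜 𝕜'] {u : 𝕜 → 𝕜'} {x : 𝕜} (hu : DifferentiableAt 𝕜 u x)
    (hux : u x ^ 2 ≠ 1) :
    logDeriv (fun y => (1 - u y) / (1 + u y)) x = -2 * deriv u x / (1 - u x ^ 2) := by
  have factor : 1 - u x ^ 2 = (1 - u x) * (1 + u x) := by ring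
  obtain ⟨hsub, hadd⟩ : 1 - u x ≠ 0 ∧ 1 + u x ≠ 0 :=
    mul_ne_zero_iff.mp (factor ▸ sub_ne_zero.mpr hux.symm)
  rw [logDeriv_div x hsub hadd (hu.const_sub 1) (hu.const_add 1), logDeriv_apply,
    logDeriv_apply, deriv_const_sub, deriv_const_add, factor]
  field_simp
  ring

theorem hasDerivAt_const_div_pow (a : 𝕜) (n : ℕ) {x : 𝕜} (hx : x ≠ 0) :
    HasDerivAt (fun y => (a / y) ^ n) (-n * (a / x) ^ n / x) x := by
  have hdiv : HasDerivAt (fun y => a / y) (-(a / x) / x) x :=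
    ((hasDerivAt_const x a).fun_div (hasDerivAt_id' x) hx).congr_deriv (by field_simp; ring)
  refine (hdiv.fun_pow n).congr_deriv ?_
  cases n with
  | zero => simp
  | succ n =>
    rw [Nat.add_sub_cancel, pow_succ]
    ring

theorem logDeriv_one_sub_div_one_add_const_div_pow (a : 𝕜) (n : ℕ) {x : 𝕜} (hx : x ≠ 0)
    (hax : (a / x) ^ (n * 2) ≠ 1) :
    logDeriv (fun y => (1 - (a / y) ^ n) / (1 + (a / y) ^ n)) x =
      2 * n * (a / x) ^ n / (x * (1 - (a / x) ^ (n * 2))) := by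
  have hu := hasDerivAt_const_div_pow a n hx
  rw [pow_mul] at hax ⊢
  rw [logDeriv_one_sub_div_one_add hu.differentiableAt hax, hu.deriv]
  have hg := sub_ne_zero.mpr hax.symm
  field_simp

end LogDeriv

theorem deriv_const_mul_sinh_sq_sub {φ : ℝ → ℝ} {x : ℝ} (hφ : DifferentiableAt ℝ φ x) (A : ℝ) :
    deriv (fun y => A * Real.sinh (φ y)) x ^ 2 - (A * Real.sinh (φ x)) ^ 2 * deriv φ x ^ 2 =
      (A * deriv φ x) ^ 2 := by
  rw [(hφ.hasDerivAt.sinh.const_mul A).deriv]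
  linear_combination (A * deriv φ x) ^ 2 * Real.cosh_sq (φ x)

theorem deriv_const_mul_sinh_sub_log_sq_sub {f : ℝ → ℝ} {x : ℝ} (hf : DifferentiableAt ℝ f x)
    (hfx : f x ≠ 0) (A c μ : ℝ) :
    deriv (fun y => A * Real.sinh (c - μ * Real.log (f y))) x ^ 2 -
        μ ^ 2 * (A * Real.sinh (c - μ * Real.log (f x))) ^ 2 * logDeriv f x ^ 2 =
      (A * μ * logDeriv f x) ^ 2 := by
  have hφ : HasDerivAt (fun y => c - μ * Real.log (f y)) (-(μ * logDeriv f x)) x :=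
    ((hf.hasDerivAt.log hfx).const_mul μ).const_sub c
  have phase_identity := deriv_const_mul_sinh_sq_sub hφ.differentiableAt A
  rw [hφ.deriv] at phase_identity
  linear_combination phase_identity

/-- The first-order equation solved by `H = e^{−4Â}` for the non-extremal
D3 (+,−,2,0) deformation: with `f(r) = (1 − (r₀/r)²)/(1 + (r₀/r)²)`,
`g(r) = 1 − (r₀/r)⁴` and `H(r) = (L²/(2lamr₀²)) sinh(c − lam log f(r))`, one has
`(H′)² − lam²H²(f′/f)² = 4L⁴/(r⁶g²)` for all `r > r₀`. -/
theorem stmt_14 (r₀ lam L c : ℝ) (hr₀ : 0 < r₀) (hlam : lam ≠ 0)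
    (f g H : ℝ → ℝ)
    (hf : ∀ r, f r = (1 - (r₀ / r) ^ 2) / (1 + (r₀ / r) ^ 2))
    (hg : ∀ r, g r = 1 - (r₀ / r) ^ 4)
    (hH : ∀ r, H r = (L ^ 2 / (2 * lam * r₀ ^ 2)) * Real.sinh (c - lam * Real.log (f r))) :
    ∀ r, r₀ < r →
      (deriv H r) ^ 2 - lam ^ 2 * (H r) ^ 2 * (deriv f r / f r) ^ 2
        = 4 * L ^ 4 / (r ^ 6 * (g r) ^ 2) := by
  intro r hr
  have hr_pos : 0 < r := hr₀.trans hr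
  have ratio_lt_one (n : ℕ) (hn : n ≠ 0) : (r₀ / r) ^ n < 1 :=
    pow_lt_one₀ (by positivity) ((div_lt_one hr_pos).mpr hr) hn
  have hf_ne : f r ≠ 0 := by
    rw [hf]
    exact (div_pos (sub_pos.mpr (ratio_lt_one 2 (by decide))) (by positivity)).ne'
  have hf_diff : DifferentiableAt ℝ f r := funext hf ▸ by fun_prop (disch := positivity)
  have logDeriv_f : logDeriv f r = 4 * (r₀ / r) ^ 2 / (r * g r) := by
    rw [funext hf, hg, logDeriv_one_sub_div_one_add_const_div_pow r₀ 2 hr_pos.ne'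
      (ratio_lt_one _ (by decide)).ne]
    norm_num
  have amplitude :
      L ^ 2 / (2 * lam * r₀ ^ 2) * lam * logDeriv f r = 2 * L ^ 2 / (r ^ 3 * g r) := by
    rw [logDeriv_f]
    field_simp
    norm_num
  rw [← logDeriv_apply, funext hH, deriv_const_mul_sinh_sub_log_sq_sub hf_diff hf_ne, amplitude]
  ring
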